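/- Let k ≥ 1 be an integer and let Z_1, …, Z_k be independent standard normal random variables (each distributed according to the Gaussian measure on ℝ with mean 0 and variance 1). Then for every real x ≥ k, P( Σ_{i=1}^k Z_i² > x ) ≤ exp( −x/2 + (k/2)·ln(e·x/k) ). -/

import Mathlib

/-!
The proof is the Chernoff bound. For a standard normal `Z` and `c > 0`, a Gaussian integral
gives `E exp(((1 - c)/2) Z²) = √(1/c)`; by independence the moment generating function of
`∑ Z_i²` at `(1 - c)/2` is `√(1/c) ^ k`. The optimal choice `c = k/x`, admissible because `x ≥ k`
makes the exponent `(1 - k/x)/2` nonnegative, turns `exp(-((1 - c)/2) x) √(1/c) ^ k` into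
exactly the claimed bound.
-/

open MeasureTheory ProbabilityTheory

/-- The moment generating function of `Z²` for `Z` standard normal, at `(1 - c)/2`.
For `c ≤ 0` the integral diverges and both sides take the junk value `0`. -/
lemma integral_exp_mul_sq_gaussianReal (c : ℝ) :
    ∫ z, Real.exp ((1 - c) / 2 * z ^ 2) ∂(gaussianReal 0 1) = √(1 / c) := by
  rw [integral_gaussianReal_eq_integral_smul one_ne_zero]
  have h : ∀ z : ℝ, gaussianPDFReal 0 1 z • Real.exp ((1 - c) / 2 * z ^ 2)
      = (√(2 * Real.pi))⁻¹ * Real.exp (-(c / 2) * z ^ 2) := by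
    intro z
    simp only [gaussianPDFReal, smul_eq_mul, NNReal.coe_one, mul_one, sub_zero]
    rw [mul_assoc, ← Real.exp_add]
    ring_nf
  simp_rw [h]
  rw [integral_const_mul, integral_gaussian, ← Real.sqrt_inv, ← Real.sqrt_mul (by positivity)]
  congr 1
  have := Real.pi_ne_zero
  field_simp

/-- The moment generating function of a chi-square variable with `k` degrees of freedom, at `(1 - c)/2`;
meaningful for `c > 0`. -/
lemma integral_exp_mul_sum_sq (k : ℕ) (c : ℝ) :
    ∫ z, Real.exp ((1 - c) / 2 * ∑ i, (z i) ^ 2)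
      ∂(Measure.pi (fun _ : Fin k => gaussianReal 0 1)) = √(1 / c) ^ k := by
  simp_rw [Finset.mul_sum, Real.exp_sum]
  rw [integral_fintype_prod_eq_prod (fun _ (y : ℝ) => Real.exp ((1 - c) / 2 * y ^ 2))]
  simp [integral_exp_mul_sq_gaussianReal]

/-- Inglot–Ledwina chi-square tail bound: if `Z_1, …, Z_k` are i.i.d. standard normal
(modeled by the `k`-fold product of the standard Gaussian measure on `ℝ`), then for
every `x ≥ k`, `P(∑ Z_i² > x) ≤ exp(−x/2 + (k/2)·ln(e·x/k))`. -/
theorem chi_square_tail_bound (k : ℕ) (hk : 1 ≤ k) (x : ℝ) (hx : (k : ℝ) ≤ x) :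
    (Measure.pi (fun _ : Fin k => gaussianReal 0 1)
        {z | x < ∑ i, (z i) ^ 2}).toReal
      ≤ Real.exp (-x / 2 + (k / 2) * Real.log (Real.exp 1 * x / k)) := by
  have hk0 : (0 : ℝ) < k := by exact_mod_cast hk
  have hx0 : 0 < x := hk0.trans_le hx
  have hmgf := integral_exp_mul_sum_sq k (k / x)
  have ht : 0 ≤ (1 - k / x) / 2 := by
    have : k / x ≤ 1 := (div_le_one hx0).2 hx
    linarith
  have hpos : 0 < √(1 / (k / x)) ^ k := by positivity
  -- A Bochner integral with a nonzero value has an integrable integrand.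
  have hint : Integrable (fun z : Fin k → ℝ => Real.exp ((1 - k / x) / 2 * ∑ i, (z i) ^ 2))
      (Measure.pi (fun _ : Fin k => gaussianReal 0 1)) := by
    by_contra h
    rw [integral_undef h] at hmgf
    exact hpos.ne hmgf
  have hchernoff := measure_ge_le_exp_mul_mgf x ht hint
  rw [mgf, hmgf] at hchernoff
  have hsub : {z : Fin k → ℝ | x < ∑ i, (z i) ^ 2} ⊆ {z | x ≤ ∑ i, (z i) ^ 2} :=
    fun z (hz : x < ∑ i, (z i) ^ 2) => hz.le
  refine (measureReal_mono hsub).trans (hchernoff.trans_eq ?_)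
  have hsqrt : √(1 / (k / x)) = Real.exp (Real.log (x / k) / 2) := by
    rw [one_div_div, ← Real.log_sqrt (by positivity), Real.exp_log (by positivity)]
  rw [hsqrt, ← Real.exp_nat_mul, ← Real.exp_add, mul_div_assoc,
    Real.log_mul (by positivity) (by positivity), Real.log_exp]
  congr 1
  field_simp
  ring
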